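/- Let H be a complex Hilbert space, let a : H →L[ℂ] H be a self-adjoint operator with 0 ≤ a ≤ 1, and let e and f be orthogonal projections on H such that e ≤ f, (1/2) • f ≤ a, and a ≤ e + (1/2) • (1 - e) (all inequalities in the Loewner order). Let v : H →L[ℂ] H with ‖v‖ ≤ 1, let η ∈ H with ‖η‖ = 1, set ξ := v η, and assume ‖ξ‖ = 1, ‖a η‖ < 1/8, and ‖a ξ‖ > 7/8. Then the operator e ∘ v ∘ (1 - f) is nonzero. -/

import Mathlib

/-- Analytic core of the key lemma: if `a` is a self-adjoint contraction with `0 ≤ a ≤ 1`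
(Loewner order), `e ≤ f` are orthogonal projections with `(1/2) • f ≤ a` and
`a ≤ e + (1/2) • (1 - e)`, `v` is a contraction, `η` a unit vector with `ξ := v η` a unit
vector, `‖a η‖ < 1/8` and `‖a ξ‖ > 7/8`, then `e ∘ v ∘ (1 - f) ≠ 0`. -/
theorem stmt0 {H : Type*} [NormedAddCommGroup H] [InnerProductSpace ℂ H] [CompleteSpace H]
    (a e f v : H →L[ℂ] H)
    (ha_pos : a.IsPositive) (ha_le_one : ((1 : H →L[ℂ] H) - a).IsPositive)
    (he_sa : IsSelfAdjoint e) (he_idem : e * e = e)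
    (hf_sa : IsSelfAdjoint f) (hf_idem : f * f = f)
    (hef : (f - e).IsPositive)
    (hfa : (a - (1 / 2 : ℂ) • f).IsPositive)
    (hae : ((e + (1 / 2 : ℂ) • ((1 : H →L[ℂ] H) - e)) - a).IsPositive)
    (hv : ‖v‖ ≤ 1)
    (η : H) (hη : ‖η‖ = 1) (hξ : ‖v η‖ = 1)
    (haη : ‖a η‖ < 1 / 8) (haξ : ‖a (v η)‖ > 7 / 8) :
    e * v * ((1 : H →L[ℂ] H) - f) ≠ 0 := by
  intro h0
  have ip : ∀ (p : H →L[ℂ] H), IsSelfAdjoint p → p * p = p → ∀ x,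
      RCLike.re (inner ℂ (p x) x) = ‖p x‖ ^ 2 := by
    intro p hp hpp x
    have h1 : inner ℂ (p (p x)) x = inner ℂ (p x) (p x) := hp.isSymmetric (p x) x
    have h2 : p (p x) = p x := congrArg (fun q : H →L[ℂ] H => q x) hpp
    rw [h2] at h1
    rw [h1]
    exact inner_self_eq_norm_sq (𝕜 := ℂ) (p x)
  have half : ∀ z : ℂ, RCLike.re ((starRingEnd ℂ) (1 / 2 : ℂ) * z) = (1 / 2) * RCLike.re z := by
    intro z
    have : (starRingEnd ℂ) (1 / 2 : ℂ) = ((1 / 2 : ℝ) : ℂ) := by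
      rw [show (1 / 2 : ℂ) = ((1 / 2 : ℝ) : ℂ) by push_cast; rfl, Complex.conj_ofReal]
    rw [this]
    exact Complex.re_ofReal_mul _ _
  have hf1 : ‖f η‖ ^ 2 < 1 / 4 := by
    have h := hfa.re_inner_nonneg_left η
    simp only [ContinuousLinearMap.sub_apply, ContinuousLinearMap.smul_apply, inner_sub_left,
      inner_smul_left, map_sub, half, ip f hf_sa hf_idem] at h
    have h2 : RCLike.re (inner ℂ (a η) η) ≤ ‖a η‖ * ‖η‖ := re_inner_le_norm _ _
    rw [hη] at h2
    linarith
  have hev : ‖e (v η)‖ ^ 2 < 1 / 4 := by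
    have h1 : e (v (η - f η)) = 0 := congrArg (fun q : H →L[ℂ] H => q η) h0
    rw [map_sub, map_sub, sub_eq_zero] at h1
    have h2 : ‖e (v (f η))‖ ≤ ‖v (f η)‖ := by
      have h := ip e he_sa he_idem (v (f η))
      have h' : RCLike.re (inner ℂ (e (v (f η))) (v (f η))) ≤ ‖e (v (f η))‖ * ‖v (f η)‖ :=
        re_inner_le_norm _ _
      nlinarith [norm_nonneg (e (v (f η))), norm_nonneg (v (f η))]
    have h3 : ‖v (f η)‖ ≤ ‖f η‖ := by
      simpa using v.le_of_opNorm_le hv (f η)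
    rw [h1]
    have := norm_nonneg (e (v (f η)))
    nlinarith
  generalize v η = x at *
  have hax : RCLike.re (inner ℂ (a x) x) < 5 / 8 := by
    have h := hae.re_inner_nonneg_left x
    simp only [ContinuousLinearMap.sub_apply, ContinuousLinearMap.add_apply,
      ContinuousLinearMap.smul_apply, inner_sub_left, inner_add_left, ContinuousLinearMap.one_apply,
      inner_smul_left, map_sub, map_add, half, ip e he_sa he_idem, inner_self_eq_norm_sq, hξ] at h
    linarith
  have h1 := ha_le_one.re_inner_nonneg_left (a x)
  have h2 := ha_pos.re_inner_nonneg_left (x - a x)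
  have h3 : inner ℂ (a (a x)) x = inner ℂ (a x) (a x) := ha_pos.isSelfAdjoint.isSymmetric (a x) x
  simp only [ContinuousLinearMap.sub_apply, ContinuousLinearMap.one_apply, inner_sub_left,
    inner_sub_right, map_sub, h3, inner_self_eq_norm_sq] at h1 h2
  nlinarith
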